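/- The supremum of Q(x, y) := ((x₁ + x₂ − y)·(y² − x₁² − x₂²)) / (x₁³ + x₂³ + y³) over all x₁, x₂, y > 0 is attained (after normalizing x₁ = 1 by homogeneity) at x₁ = x₂ = 1 and y = (√(9 + 4√6) − 1)/2, and this supremum is strictly smaller than 2·c*, where c* := (7√7 − 17)/27. -/

import Mathlib

/-!
The quantity `Q` is homogeneous of degree `0`. If `y ≥ x₁ + x₂` then `Q ≤ 0`; otherwise, with
`s = x₁ + x₂` fixed, the numerator of `Q` increases and its denominator decreases with `x₁ x₂`, so
`x₁ = x₂ = s / 2` is the worst case. In that case, writing `y₀` for the claimed maximiser and `M`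
for the maximum, the difference `M (2 t³ + y³) - (2 t - y)(y² - 2 t²)` is the cubic
`(y - y₀ t)² (α y + β t)` with `α = (4 y₀ + 2) / (3 y₀²)` and `β = (2 y₀ + 4) / (3 y₀)` positive.
The double root at `y₀` amounts to the critical point equation
`y₀⁴ + 2 y₀³ - 3 y₀² - 4 y₀ - 2 = 0`, a quadratic in `y₀² + y₀` with root `2 + √6`.
-/

/-- `Q(x₁, x₂, y) = ((x₁ + x₂ - y)(y² - x₁² - x₂²))/(x₁³ + x₂³ + y³)`. -/
noncomputable def Q (x₁ x₂ y : ℝ) : ℝ :=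
  (x₁ + x₂ - y) * (y^2 - x₁^2 - x₂^2) / (x₁^3 + x₂^3 + y^3)

/-- The critical point equation for `y₀` and a rational enclosure of `y₀`. -/
lemma critical_point_spec :
    let r : ℝ := (Real.sqrt (9 + 4 * Real.sqrt 6) - 1) / 2
    1.6 < r ∧ r < 1.7 ∧ r^4 + 2 * r^3 - 3 * r^2 - 4 * r - 2 = 0 := by
  intro r
  have h6 : Real.sqrt 6 ^ 2 = 6 := Real.sq_sqrt (by norm_num)
  have h6l : 2.44 < Real.sqrt 6 := Real.lt_sqrt_of_sq_lt (by norm_num)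
  have h6u : Real.sqrt 6 < 2.45 := (Real.sqrt_lt' (by norm_num)).2 (by norm_num)
  have hs : Real.sqrt (9 + 4 * Real.sqrt 6) ^ 2 = 9 + 4 * Real.sqrt 6 :=
    Real.sq_sqrt (by positivity)
  have hl : 4.2 < Real.sqrt (9 + 4 * Real.sqrt 6) :=
    Real.lt_sqrt_of_sq_lt (by norm_num at *; linarith)
  have hu : Real.sqrt (9 + 4 * Real.sqrt 6) < 4.4 :=
    (Real.sqrt_lt' (by norm_num)).2 (by norm_num at *; linarith)
  have hr : r ^ 2 + r = 2 + Real.sqrt 6 := by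
    simp only [r]
    linear_combination hs / 4
  refine ⟨?_, ?_, ?_⟩
  · simp only [r]; norm_num at *; linarith
  · simp only [r]; norm_num at *; linarith
  · linear_combination (r ^ 2 + r + Real.sqrt 6 - 2) * hr + h6

/-- At the critical point, the value of `Q` is the ratio of the derivatives of its numerator and
denominator. -/
lemma Q_critical {r : ℝ} (h0 : 0 < r) (h : r^4 + 2 * r^3 - 3 * r^2 - 4 * r - 2 = 0) :
    Q 1 1 r = (4 * r + 2) / (3 * r^2) - 1 := by
  have hD : (1:ℝ)^3 + 1^3 + r^3 ≠ 0 := by positivity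
  unfold Q
  rw [div_eq_iff hD]
  field_simp
  linear_combination 2 * h

/-- The diagonal case `x₁ = x₂ = t`. -/
lemma diagonal_bound {r M t y : ℝ} (h0 : 0 < r)
    (h : r^4 + 2 * r^3 - 3 * r^2 - 4 * r - 2 = 0)
    (hM : M = (4 * r + 2) / (3 * r^2) - 1) (ht : 0 < t) (hy : 0 < y) :
    (2 * t - y) * (y^2 - 2 * t^2) ≤ M * (2 * t^3 + y^3) := by
  have key : M * (2 * t^3 + y^3) - (2 * t - y) * (y^2 - 2 * t^2)
      = (y - r * t)^2 * ((4 * r + 2) / (3 * r^2) * y + (2 * r + 4) / (3 * r) * t) := by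
    rw [hM]
    field_simp
    linear_combination (-2 * t^3) * h
  have : 0 ≤ (y - r * t)^2 * ((4 * r + 2) / (3 * r^2) * y + (2 * r + 4) / (3 * r) * t) := by
    positivity
  linarith

theorem stmt_9 :
    IsGreatest {q : ℝ | ∃ x₁ x₂ y : ℝ, 0 < x₁ ∧ 0 < x₂ ∧ 0 < y ∧ q = Q x₁ x₂ y}
        (Q 1 1 ((Real.sqrt (9 + 4 * Real.sqrt 6) - 1) / 2)) ∧
      Q 1 1 ((Real.sqrt (9 + 4 * Real.sqrt 6) - 1) / 2)
        < 2 * ((7 * Real.sqrt 7 - 17) / 27) := by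
  obtain ⟨hl, hu, h⟩ := critical_point_spec
  generalize (Real.sqrt (9 + 4 * Real.sqrt 6) - 1) / 2 = r at hl hu h ⊢
  have h0 : 0 < r := by norm_num at hl; linarith
  have hM := Q_critical h0 h
  have hMpos : 0 < Q 1 1 r := by
    rw [hM, sub_pos, lt_div_iff₀ (by positivity)]
    norm_num at *
    nlinarith
  refine ⟨⟨⟨1, 1, r, one_pos, one_pos, h0, rfl⟩, ?_⟩, ?_⟩
  · rintro _ ⟨a, b, y, ha, hb, hy, rfl⟩
    generalize Q 1 1 r = M at hM hMpos
    unfold Q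
    rw [div_le_iff₀ (by positivity)]
    rcases le_total y (a + b) with hyab | hyab
    · have hd := diagonal_bound (t := (a + b) / 2) h0 h hM (by positivity) hy
      -- Replacing `a b` by `(a + b)² / 4` costs a multiple of `(a - b)²`.
      have h1 : 0 ≤ (a - b)^2 * (a + b - y) := mul_nonneg (sq_nonneg _) (by linarith)
      have h2 : 0 ≤ M * ((a - b)^2 * (a + b)) := by positivity
      linear_combination hd + h1 / 2 + 3 / 4 * h2
    · have h1 : (a + b - y) * (y^2 - a^2 - b^2) ≤ 0 :=
        mul_nonpos_of_nonpos_of_nonneg (by linarith) (by nlinarith [mul_pos ha hb])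
      have h2 : 0 ≤ M * (a^3 + b^3 + y^3) := by positivity
      linarith
  · have h7 : 2.64 < Real.sqrt 7 := Real.lt_sqrt_of_sq_lt (by norm_num)
    have : Q 1 1 r < 0.109 := by
      rw [hM, sub_lt_iff_lt_add, div_lt_iff₀ (by positivity)]
      norm_num at *
      nlinarith
    norm_num at *
    linarith
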